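/- Let l : [0,1] → (0,1) be continuous and set r = ∫₀¹ l(y) dy. For each ℓ ≥ 1 let K₀^{(ℓ)}, …, K_{ℓ−1}^{(ℓ)} be independent {0,1}-valued random variables with P(K_j^{(ℓ)} = 1) = l(j/ℓ), and let S^{(ℓ)} = Σ_{j=0}^{ℓ−1} K_j^{(ℓ)}. Let (n_ℓ) be integers with 0 ≤ n_ℓ ≤ ℓ and √ℓ · |n_ℓ/ℓ − r| → 0 as ℓ → ∞. Then liminf_{ℓ→∞} (1/ℓ) [ H(K₀^{(ℓ)}, …, K_{ℓ−1}^{(ℓ)} | S^{(ℓ)} = n_ℓ) − H(K₀^{(ℓ)}, …, K_{ℓ−1}^{(ℓ)}) ] ≥ 0. -/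

import Mathlib

open Filter

/-- The probability that a string of independent `{0,1}`-valued random variables,
where the `i`-th has success probability `p i`, takes the value `x`. -/
noncomputable def bernProb {ℓ : ℕ} (p : Fin ℓ → ℝ) (x : Fin ℓ → Bool) : ℝ :=
  ∏ i, if x i then p i else 1 - p i

/-- The number of ones in the binary string `x`. -/
def onesCount {ℓ : ℕ} (x : Fin ℓ → Bool) : ℕ :=
  (Finset.univ.filter (fun i => x i = true)).card

/-- `P(S = n)` where `S` is the sum of the independent `{0,1}`-valued variables. -/
noncomputable def probSum {ℓ : ℕ} (p : Fin ℓ → ℝ) (n : ℕ) : ℝ :=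
  ∑ x : Fin ℓ → Bool, if onesCount x = n then bernProb p x else 0

/-- Shannon entropy `H(K₀, …, K_{ℓ-1})` of the joint distribution. -/
noncomputable def entJoint {ℓ : ℕ} (p : Fin ℓ → ℝ) : ℝ :=
  -∑ x : Fin ℓ → Bool, bernProb p x * Real.log (bernProb p x)

/-- Shannon entropy `H(K₀, …, K_{ℓ-1} | S = n)` of the conditional distribution
given that the sum of the variables equals `n`. -/
noncomputable def entCond {ℓ : ℕ} (p : Fin ℓ → ℝ) (n : ℕ) : ℝ :=
  -∑ x : Fin ℓ → Bool, if onesCount x = n then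
      (bernProb p x / probSum p n) * Real.log (bernProb p x / probSum p n) else 0

open Finset Real Topology

/-! The log-likelihood of a string is affine in its bits:
`log P(K = x) = ∑ λᵢ (xᵢ - pᵢ) - H(K)`, where `λᵢ` is the log odds of `pᵢ`. Hence
`H(K | S = n) - H(K) = log P(S = n) - E[∑ λᵢ (Kᵢ - pᵢ) | S = n]`.
Jensen's inequality and Hoeffding's lemma give, for every event `A` and all weights `u`,
`E[∑ uᵢ (Kᵢ - pᵢ) | A]² ≤ (∑ uᵢ² / 2) (-log P(A))`, so it suffices that `log P(S = n_ℓ) = o(ℓ)`.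
For `u = 1` the same inequality puts any `m` with `P(S = m) ≥ 1 / (ℓ + 1)` within
`√(ℓ log (ℓ + 1) / 2)` of the mean of `S`. Flipping single bits shows that `P(S = k)` changes at
most by a constant factor from one `k` in the bulk to the next, and `n_ℓ` is reached from `m` in
`o(ℓ)` such steps. -/

section BernoulliProduct

variable {ℓ : ℕ} {p : Fin ℓ → ℝ}

lemma bernProb_nonneg (hp : ∀ i, p i ∈ Set.Icc 0 1) (x : Fin ℓ → Bool) : 0 ≤ bernProb p x := by
  refine prod_nonneg fun i _ => ?_
  have := hp i
  split_ifs <;> linarith [this.1, this.2]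

lemma bernProb_pos (hp : ∀ i, p i ∈ Set.Ioo 0 1) (x : Fin ℓ → Bool) : 0 < bernProb p x := by
  refine prod_pos fun i _ => ?_
  have := hp i
  split_ifs <;> linarith [this.1, this.2]

lemma sum_bernProb_mul_prod (p : Fin ℓ → ℝ) (g : Fin ℓ → Bool → ℝ) :
    ∑ x, bernProb p x * ∏ i, g i (x i) = ∏ i, (p i * g i true + (1 - p i) * g i false) := by
  have h := sum_prod_piFinset univ fun i b => (if b then p i else 1 - p i) * g i b
  rw [Fintype.piFinset_univ] at h
  simpa only [bernProb, ← prod_mul_distrib, Fintype.sum_bool, Bool.false_eq_true, if_true,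
    if_false] using h

lemma sum_bernProb (p : Fin ℓ → ℝ) : ∑ x, bernProb p x = 1 := by
  simpa using sum_bernProb_mul_prod p fun _ _ => 1

lemma sum_bernProb_mul_apply (p : Fin ℓ → ℝ) (i : Fin ℓ) (f : Bool → ℝ) :
    ∑ x, bernProb p x * f (x i) = p i * f true + (1 - p i) * f false := by
  have h := sum_bernProb_mul_prod p fun j b => if j = i then f b else 1
  rw [prod_eq_single_of_mem i (mem_univ i) fun j _ hj => by simp [hj]] at h
  simpa using h

/-- The centred linear statistic `∑ uᵢ (xᵢ - pᵢ)` of a binary string `x`, the bit `xᵢ` being read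
as the number `0` or `1`. Both `S - E[S]` and the log-likelihood have this form. -/
noncomputable def centeredSum (p u : Fin ℓ → ℝ) (x : Fin ℓ → Bool) : ℝ :=
  ∑ i, u i * ((x i).toNat - p i)

lemma sum_bernProb_mul_centeredSum (p u : Fin ℓ → ℝ) :
    ∑ x, bernProb p x * centeredSum p u x = 0 := by
  simp only [centeredSum, mul_sum]
  rw [sum_comm]
  refine sum_eq_zero fun i _ => ?_
  rw [sum_bernProb_mul_apply p i fun b => u i * (b.toNat - p i)]
  simp only [Bool.toNat_true, Bool.toNat_false, Nat.cast_one, Nat.cast_zero]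
  ring

lemma onesCount_cast (x : Fin ℓ → Bool) : (onesCount x : ℝ) = ∑ i, ((x i).toNat : ℝ) := by
  rw [onesCount, card_filter, Nat.cast_sum]
  refine sum_congr rfl fun i _ => ?_
  cases x i <;> simp

lemma centeredSum_one (p : Fin ℓ → ℝ) (x : Fin ℓ → Bool) :
    centeredSum p 1 x = onesCount x - ∑ i, p i := by
  simp [centeredSum, onesCount_cast]

/-- The probability of the event `A` under the law `bernProb p`, normalizing the conditional
expectation `condMean`. -/
noncomputable def eventProb (p : Fin ℓ → ℝ) (A : Finset (Fin ℓ → Bool)) : ℝ :=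
  ∑ x ∈ A, bernProb p x

/-- The conditional expectation `E[f | A]` under the law `bernProb p`, used to express and bound
conditional entropies; its value is the junk `0` when `A` has probability zero. -/
noncomputable def condMean (p : Fin ℓ → ℝ) (A : Finset (Fin ℓ → Bool))
    (f : (Fin ℓ → Bool) → ℝ) : ℝ :=
  (∑ x ∈ A, bernProb p x * f x) / eventProb p A

variable {A : Finset (Fin ℓ → Bool)}

lemma eventProb_nonneg (hp : ∀ i, p i ∈ Set.Icc 0 1) (A : Finset (Fin ℓ → Bool)) :
    0 ≤ eventProb p A :=
  sum_nonneg fun x _ => bernProb_nonneg hp x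

lemma condMean_eq_of_forall_eq {f : (Fin ℓ → Bool) → ℝ} {c : ℝ} (hA : 0 < eventProb p A)
    (hf : ∀ x ∈ A, f x = c) : condMean p A f = c := by
  rw [condMean, sum_congr rfl fun x hx => by rw [hf x hx], ← sum_mul, ← eventProb,
    mul_div_cancel_left₀ c hA.ne']

lemma condMean_const_mul (p : Fin ℓ → ℝ) (A : Finset (Fin ℓ → Bool)) (c : ℝ)
    (f : (Fin ℓ → Bool) → ℝ) : condMean p A (fun x => c * f x) = c * condMean p A f := by
  simp only [condMean, mul_left_comm _ c, ← mul_sum, mul_div_assoc]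

lemma exp_condMean_le (hp : ∀ i, p i ∈ Set.Icc 0 1) (hA : 0 < eventProb p A)
    (f : (Fin ℓ → Bool) → ℝ) : exp (condMean p A f) ≤ condMean p A fun x => exp (f x) := by
  have h := convexOn_exp.map_centerMass_le (p := f) (fun x _ => bernProb_nonneg hp x) hA
    fun x _ => Set.mem_univ _
  simpa [centerMass, condMean, eventProb, div_eq_inv_mul] using h

end BernoulliProduct

section Transport

open MeasureTheory ProbabilityTheory in
lemma bernoulli_mgf_le {q : ℝ} (hq : q ∈ Set.Icc 0 1) (u : ℝ) :
    q * exp (u * (1 - q)) + (1 - q) * exp (-(u * q)) ≤ exp (u ^ 2 / 8) := by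
  let μ := bernoulliMeasure true false ⟨q, hq⟩
  let X : Bool → ℝ := fun b => b.toNat
  have hX : ∀ᵐ b ∂μ, X b ∈ Set.Icc 0 1 := ae_of_all _ fun b => by cases b <;> simp [X]
  have h := (hasSubgaussianMGF_of_mem_Icc (measurable_of_finite X).aemeasurable hX).mgf_le u
  convert h using 1
  · simp [mgf, X, μ, integral_bernoulliMeasure]
  · rw [sub_zero, nnnorm_one]
    push_cast
    ring_nf

variable {ℓ : ℕ} {p : Fin ℓ → ℝ} {A : Finset (Fin ℓ → Bool)}

lemma sum_bernProb_mul_exp_centeredSum_le (hp : ∀ i, p i ∈ Set.Icc 0 1) (u : Fin ℓ → ℝ) :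
    ∑ x, bernProb p x * exp (centeredSum p u x) ≤ exp ((∑ i, u i ^ 2) / 8) := by
  simp only [centeredSum, exp_sum]
  rw [sum_bernProb_mul_prod p fun i b => exp (u i * (b.toNat - p i)), sum_div, exp_sum]
  refine prod_le_prod (fun i _ => ?_) fun i _ => ?_
  · have := sub_nonneg.2 (hp i).2
    have := (hp i).1
    positivity
  · simpa using bernoulli_mgf_le (hp i) (u i)

lemma condMean_centeredSum_le (hp : ∀ i, p i ∈ Set.Icc 0 1) (hA : 0 < eventProb p A)
    (u : Fin ℓ → ℝ) :
    condMean p A (centeredSum p u) ≤ (∑ i, u i ^ 2) / 8 - log (eventProb p A) := by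
  have h_exp : exp (condMean p A (centeredSum p u)) ≤
      exp ((∑ i, u i ^ 2) / 8) / eventProb p A := by
    refine (exp_condMean_le hp hA _).trans (div_le_div_of_nonneg_right ?_ hA.le)
    refine (sum_le_univ_sum_of_nonneg fun x => ?_).trans (sum_bernProb_mul_exp_centeredSum_le hp u)
    exact mul_nonneg (bernProb_nonneg hp x) (exp_pos _).le
  rwa [← le_log_iff_exp_le (by positivity), log_div (exp_pos _).ne' hA.ne', log_exp] at h_exp

/- The linear bound for the weights `t • u` is a quadratic inequality in `t`; its discriminant gives
the optimal `t`. -/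
lemma condMean_centeredSum_sq_le (hp : ∀ i, p i ∈ Set.Icc 0 1) (hA : 0 < eventProb p A)
    (u : Fin ℓ → ℝ) :
    condMean p A (centeredSum p u) ^ 2 ≤ (∑ i, u i ^ 2) / 2 * -log (eventProb p A) := by
  have h_quadratic (t : ℝ) : 0 ≤ (∑ i, u i ^ 2) / 8 * (t * t) +
      -condMean p A (centeredSum p u) * t + -log (eventProb p A) := by
    have h := condMean_centeredSum_le hp hA (t • u)
    have h_smul : centeredSum p (t • u) = fun x => t * centeredSum p u x := by
      funext x
      simp [centeredSum, mul_sum, mul_assoc]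
    simp only [h_smul, condMean_const_mul, Pi.smul_apply, smul_eq_mul, mul_pow, ← mul_sum] at h
    linarith
  have := discrim_le_zero h_quadratic
  rw [discrim] at this
  linarith

end Transport

section Entropy

variable {ℓ : ℕ} {p : Fin ℓ → ℝ}

/-- The log-likelihood ratio of the two values of a Bernoulli variable of parameter `q`. The
log-likelihood of a string is the centred sum with these weights, up to a constant. -/
noncomputable def logOdds (q : ℝ) : ℝ := log q - log (1 - q)

lemma abs_logOdds_le {a q : ℝ} (ha : 0 < a) (hq : q ∈ Set.Icc a (1 - a)) :
    |logOdds q| ≤ -log a := by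
  have hq₀ : 0 < q := ha.trans_le hq.1
  have hq₁ : 0 < 1 - q := by linarith [hq.2]
  have := log_le_log ha hq.1
  have := log_le_log ha (le_sub_comm.1 hq.2)
  have := log_nonpos hq₀.le (by linarith)
  have := log_nonpos hq₁.le (by linarith)
  rw [logOdds, abs_le]
  constructor <;> linarith

lemma log_bernProb (hp : ∀ i, p i ∈ Set.Ioo 0 1) (x : Fin ℓ → Bool) :
    log (bernProb p x) = centeredSum p (logOdds ∘ p) x - ∑ i, binEntropy (p i) := by
  rw [bernProb, log_prod, centeredSum, ← sum_sub_distrib]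
  · refine sum_congr rfl fun i _ => ?_
    cases x i <;> simp only [Bool.false_eq_true, if_true, if_false, Bool.toNat_true,
      Bool.toNat_false, Nat.cast_one, Nat.cast_zero, Function.comp_apply, logOdds, binEntropy,
      log_inv] <;> ring
  · intro i _
    have := hp i
    split_ifs <;> linarith [this.1, this.2]

lemma entJoint_eq_sum_binEntropy (hp : ∀ i, p i ∈ Set.Ioo 0 1) :
    entJoint p = ∑ i, binEntropy (p i) := by
  simp only [entJoint, log_bernProb hp, mul_sub, sum_sub_distrib, sum_bernProb_mul_centeredSum,
    ← sum_mul, sum_bernProb]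
  ring

/-- The event `S = n`, as the set of the binary strings of length `ℓ` with `n` ones. -/
def onesLevel (ℓ n : ℕ) : Finset (Fin ℓ → Bool) := {x | onesCount x = n}

lemma mem_onesLevel {n : ℕ} {x : Fin ℓ → Bool} : x ∈ onesLevel ℓ n ↔ onesCount x = n := by
  simp [onesLevel]

lemma probSum_eq_eventProb (p : Fin ℓ → ℝ) (n : ℕ) :
    probSum p n = eventProb p (onesLevel ℓ n) := by
  rw [probSum, eventProb, onesLevel, sum_filter]

lemma probSum_nonneg (hp : ∀ i, p i ∈ Set.Icc 0 1) (n : ℕ) : 0 ≤ probSum p n := by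
  rw [probSum_eq_eventProb]
  exact eventProb_nonneg hp _

lemma probSum_le_one (hp : ∀ i, p i ∈ Set.Icc 0 1) (n : ℕ) : probSum p n ≤ 1 := by
  rw [probSum_eq_eventProb, ← sum_bernProb p]
  exact sum_le_univ_sum_of_nonneg fun x => bernProb_nonneg hp x

lemma entCond_eq (hp : ∀ i, p i ∈ Set.Ioo 0 1) {n : ℕ} (hn : 0 < probSum p n) :
    entCond p n = ∑ i, binEntropy (p i) + log (probSum p n) -
      condMean p (onesLevel ℓ n) (centeredSum p (logOdds ∘ p)) := by
  have h_term (x : Fin ℓ → Bool) :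
      bernProb p x / probSum p n * log (bernProb p x / probSum p n) =
        bernProb p x * centeredSum p (logOdds ∘ p) x / probSum p n -
          bernProb p x / probSum p n * (∑ i, binEntropy (p i) + log (probSum p n)) := by
    rw [log_div (bernProb_pos hp x).ne' hn.ne', log_bernProb hp]
    ring
  have h_total : ∑ x ∈ onesLevel ℓ n, bernProb p x / probSum p n = 1 := by
    rw [← sum_div, ← eventProb, ← probSum_eq_eventProb, div_self hn.ne']
  rw [entCond, ← sum_filter, ← onesLevel]
  simp only [h_term, sum_sub_distrib, ← sum_mul, h_total, condMean, ← sum_div,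
    ← probSum_eq_eventProb]
  ring

lemma abs_entCond_sub_entJoint_le (hp : ∀ i, p i ∈ Set.Ioo 0 1) {n : ℕ} (hn : 0 < probSum p n) :
    |entCond p n - entJoint p| ≤
      √((∑ i, logOdds (p i) ^ 2) / 2 * -log (probSum p n)) + -log (probSum p n) := by
  have hp' (i : Fin ℓ) : p i ∈ Set.Icc 0 1 := Set.Ioo_subset_Icc_self (hp i)
  have h_log : 0 ≤ -log (probSum p n) :=
    neg_nonneg.2 (log_nonpos hn.le (probSum_le_one hp' n))
  have h_mean : |condMean p (onesLevel ℓ n) (centeredSum p (logOdds ∘ p))| ≤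
      √((∑ i, logOdds (p i) ^ 2) / 2 * -log (probSum p n)) := by
    refine abs_le_sqrt ?_
    rw [probSum_eq_eventProb] at hn ⊢
    exact condMean_centeredSum_sq_le hp' hn _
  rw [abs_le] at h_mean ⊢
  rw [entCond_eq hp hn, entJoint_eq_sum_binEntropy hp]
  constructor <;> linarith [h_mean.1, h_mean.2]

end Entropy

section LocalLimit

variable {ℓ : ℕ} {p : Fin ℓ → ℝ}

lemma onesCount_le (x : Fin ℓ → Bool) : onesCount x ≤ ℓ := by
  simpa [onesCount] using card_filter_le univ fun i => x i = true

lemma sum_probSum (p : Fin ℓ → ℝ) : ∑ m ∈ range (ℓ + 1), probSum p m = 1 := by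
  simp only [probSum, ← sum_filter]
  rw [sum_fiberwise_of_maps_to fun x _ => mem_range_succ_iff.2 (onesCount_le x), sum_bernProb]

lemma exists_inv_le_probSum (p : Fin ℓ → ℝ) : ∃ m, ((ℓ : ℝ) + 1)⁻¹ ≤ probSum p m := by
  obtain ⟨m, -, hm⟩ := exists_le_of_sum_le (s := range (ℓ + 1)) (f := fun _ => ((ℓ : ℝ) + 1)⁻¹)
    (g := probSum p) nonempty_range_add_one <| by
      rw [sum_probSum, sum_const, card_range, nsmul_eq_mul, Nat.cast_succ,
        mul_inv_cancel₀ (by positivity)]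
  exact ⟨m, hm⟩

lemma sq_sub_sum_le (hp : ∀ i, p i ∈ Set.Icc 0 1) {m : ℕ} (hm : 0 < probSum p m) :
    ((m : ℝ) - ∑ i, p i) ^ 2 ≤ ℓ / 2 * -log (probSum p m) := by
  rw [probSum_eq_eventProb] at hm ⊢
  have h_mean : condMean p (onesLevel ℓ m) (centeredSum p 1) = m - ∑ i, p i :=
    condMean_eq_of_forall_eq hm fun x hx => by rw [centeredSum_one, mem_onesLevel.1 hx]
  simpa [h_mean] using condMean_centeredSum_sq_le hp hm 1

lemma onesCount_update_true {x : Fin ℓ → Bool} {i : Fin ℓ} (hx : x i = false) :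
    onesCount (Function.update x i true) = onesCount x + 1 := by
  have h_insert : ({j | Function.update x i true j = true} : Finset (Fin ℓ)) =
      insert i ({j | x j = true} : Finset (Fin ℓ)) := by
    ext j
    by_cases hj : j = i <;> simp [hj]
  rw [onesCount, h_insert, card_insert_of_notMem (by simp [hx]), onesCount]

lemma mul_bernProb_update_true {x : Fin ℓ → Bool} {i : Fin ℓ} (hx : x i = false) :
    (1 - p i) * bernProb p (Function.update x i true) = p i * bernProb p x := by
  have h_rest : ∏ j ∈ univ.erase i, (if Function.update x i true j then p j else 1 - p j) =
      ∏ j ∈ univ.erase i, if x j then p j else 1 - p j :=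
    prod_congr rfl fun j hj => by rw [Function.update_of_ne (ne_of_mem_erase hj)]
  rw [bernProb, bernProb, ← mul_prod_erase univ _ (mem_univ i), h_rest,
    ← mul_prod_erase univ (fun j => if x j then p j else 1 - p j) (mem_univ i)]
  simp only [Function.update_self, hx, if_true, Bool.false_eq_true, if_false]
  ring

lemma mul_eventProb_onesLevel_succ (p : Fin ℓ → ℝ) (m : ℕ) (i : Fin ℓ) :
    (1 - p i) * eventProb p {x ∈ onesLevel ℓ (m + 1) | x i = true} =
      p i * eventProb p {x ∈ onesLevel ℓ m | x i = false} := by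
  simp only [eventProb, mul_sum]
  symm
  refine sum_bij' (fun x _ => Function.update x i true) (fun x _ => Function.update x i false)
    ?_ ?_ ?_ ?_ ?_
  · intro x hx
    obtain ⟨hx, hxi⟩ := mem_filter.1 hx
    simp [mem_onesLevel, onesCount_update_true hxi, mem_onesLevel.1 hx]
  · intro x hx
    obtain ⟨hx, hxi⟩ := mem_filter.1 hx
    have h := onesCount_update_true (x := Function.update x i false) (i := i) (by simp)
    rw [Function.update_idem, ← hxi, Function.update_eq_self, mem_onesLevel.1 hx] at h
    simpa [mem_onesLevel] using h.symm
  · intro x hx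
    simp [← (mem_filter.1 hx).2]
  · intro x hx
    simp [← (mem_filter.1 hx).2]
  · intro x hx
    exact (mul_bernProb_update_true (mem_filter.1 hx).2).symm

lemma sum_eventProb_onesLevel_true (p : Fin ℓ → ℝ) (m : ℕ) :
    ∑ i, eventProb p {x ∈ onesLevel ℓ m | x i = true} = m * probSum p m := by
  simp only [eventProb, sum_filter]
  rw [sum_comm, probSum_eq_eventProb, eventProb, mul_sum]
  refine sum_congr rfl fun x hx => ?_
  rw [← sum_filter, sum_const, nsmul_eq_mul, ← onesCount, mem_onesLevel.1 hx]

lemma sum_eventProb_onesLevel_false (p : Fin ℓ → ℝ) (m : ℕ) :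
    ∑ i, eventProb p {x ∈ onesLevel ℓ m | x i = false} = (ℓ - m) * probSum p m := by
  have h_split (i : Fin ℓ) : eventProb p {x ∈ onesLevel ℓ m | x i = true} +
      eventProb p {x ∈ onesLevel ℓ m | x i = false} = probSum p m := by
    simpa only [probSum_eq_eventProb, eventProb, Bool.not_eq_true] using
      sum_filter_add_sum_filter_not (onesLevel ℓ m) (fun x => x i = true) (bernProb p)
  have h_total := sum_congr rfl fun i (_ : i ∈ univ) => h_split i
  rw [sum_add_distrib, sum_eventProb_onesLevel_true, sum_const, card_univ, Fintype.card_fin,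
    nsmul_eq_mul] at h_total
  linarith

variable {a : ℝ}

lemma Icc_one_sub_subset_Ioo (ha : 0 < a) : Set.Icc a (1 - a) ⊆ Set.Ioo 0 1 :=
  Set.Icc_subset_Ioo ha (by linarith)

lemma Icc_one_sub_subset_Icc (ha : 0 < a) : Set.Icc a (1 - a) ⊆ Set.Icc 0 1 :=
  (Icc_one_sub_subset_Ioo ha).trans Set.Ioo_subset_Icc_self

lemma mul_probSum_le_probSum_succ (ha : 0 < a) (hp : ∀ i, p i ∈ Set.Icc a (1 - a)) (m : ℕ) :
    a * ((ℓ - m) * probSum p m) ≤ (m + 1) * probSum p (m + 1) := by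
  have h_nonneg := eventProb_nonneg fun i => Icc_one_sub_subset_Icc ha (hp i)
  rw [← sum_eventProb_onesLevel_false, ← Nat.cast_succ, ← sum_eventProb_onesLevel_true, mul_sum]
  refine sum_le_sum fun i _ => ?_
  calc a * eventProb p {x ∈ onesLevel ℓ m | x i = false}
      ≤ p i * eventProb p {x ∈ onesLevel ℓ m | x i = false} :=
        mul_le_mul_of_nonneg_right (hp i).1 (h_nonneg _)
    _ = (1 - p i) * eventProb p {x ∈ onesLevel ℓ (m + 1) | x i = true} :=
        (mul_eventProb_onesLevel_succ p m i).symm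
    _ ≤ eventProb p {x ∈ onesLevel ℓ (m + 1) | x i = true} :=
        mul_le_of_le_one_left (h_nonneg _) (by linarith [(hp i).1])

lemma mul_probSum_succ_le_probSum (ha : 0 < a) (hp : ∀ i, p i ∈ Set.Icc a (1 - a)) (m : ℕ) :
    a * ((m + 1) * probSum p (m + 1)) ≤ (ℓ - m) * probSum p m := by
  have h_nonneg := eventProb_nonneg fun i => Icc_one_sub_subset_Icc ha (hp i)
  rw [← sum_eventProb_onesLevel_false, ← Nat.cast_succ, ← sum_eventProb_onesLevel_true, mul_sum]
  refine sum_le_sum fun i _ => ?_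
  calc a * eventProb p {x ∈ onesLevel ℓ (m + 1) | x i = true}
      ≤ (1 - p i) * eventProb p {x ∈ onesLevel ℓ (m + 1) | x i = true} :=
        mul_le_mul_of_nonneg_right (le_sub_comm.1 (hp i).2) (h_nonneg _)
    _ = p i * eventProb p {x ∈ onesLevel ℓ m | x i = false} :=
        mul_eventProb_onesLevel_succ p m i
    _ ≤ eventProb p {x ∈ onesLevel ℓ m | x i = false} :=
        mul_le_of_le_one_left (h_nonneg _) (by linarith [(hp i).2])

lemma half_sq_mul_probSum_le_probSum_succ (ha : 0 < a) (hp : ∀ i, p i ∈ Set.Icc a (1 - a)) {m : ℕ}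
    (hm : (m : ℝ) + 1 ≤ (1 - a / 2) * ℓ) : a ^ 2 / 2 * probSum p m ≤ probSum p (m + 1) := by
  have h_nonneg := probSum_nonneg fun i => Icc_one_sub_subset_Icc ha (hp i)
  have h_half : 0 ≤ a / 2 * ℓ := by positivity
  have h_pos : 0 < (ℓ : ℝ) - m := by linarith
  have h_ratio : a / 2 * (m + 1) ≤ (ℓ : ℝ) - m := by
    have : a / 2 * (m + 1) ≤ a / 2 * ℓ := by gcongr; linarith
    linarith
  refine le_of_mul_le_mul_left ?_ h_pos
  have h₁ := mul_probSum_le_probSum_succ ha hp m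
  have h₂ := mul_le_mul_of_nonneg_right h_ratio (h_nonneg (m + 1))
  nlinarith

lemma half_sq_mul_probSum_succ_le_probSum (ha : 0 < a) (hp : ∀ i, p i ∈ Set.Icc a (1 - a)) {m : ℕ}
    (hm : a / 2 * ℓ ≤ m + 1) : a ^ 2 / 2 * probSum p (m + 1) ≤ probSum p m := by
  have h_nonneg := probSum_nonneg fun i => Icc_one_sub_subset_Icc ha (hp i)
  have h_ratio : a / 2 * (ℓ - m) ≤ (m : ℝ) + 1 := by nlinarith [Nat.cast_nonneg (α := ℝ) m]
  refine le_of_mul_le_mul_left ?_ (Nat.cast_add_one_pos (α := ℝ) m)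
  have h₁ := mul_probSum_succ_le_probSum ha hp m
  have h₂ := mul_le_mul_of_nonneg_right h_ratio (h_nonneg m)
  nlinarith

lemma pow_mul_probSum_le_probSum_add (ha : 0 < a) (hp : ∀ i, p i ∈ Set.Icc a (1 - a)) {m j : ℕ}
    (hmj : ((m + j : ℕ) : ℝ) ≤ (1 - a / 2) * ℓ) :
    (a ^ 2 / 2) ^ j * probSum p m ≤ probSum p (m + j) := by
  refine geom_le (u := fun k => probSum p (m + k)) (by positivity) j fun k hk => ?_
  refine half_sq_mul_probSum_le_probSum_succ ha hp (hmj.trans' ?_)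
  exact_mod_cast (by omega : m + k + 1 ≤ m + j)

lemma pow_mul_probSum_add_le_probSum (ha : 0 < a) (hp : ∀ i, p i ∈ Set.Icc a (1 - a)) {m j : ℕ}
    (hm : a / 2 * ℓ ≤ m) : (a ^ 2 / 2) ^ j * probSum p (m + j) ≤ probSum p m := by
  have h := geom_le (u := fun k => probSum p (m + (j - k))) (by positivity : 0 ≤ a ^ 2 / 2) j
    fun k hk => ?_
  · simpa using h
  · rw [show m + (j - k) = m + (j - (k + 1)) + 1 by omega]
    refine half_sq_mul_probSum_succ_le_probSum ha hp (hm.trans ?_)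
    exact_mod_cast (by omega : m ≤ m + (j - (k + 1)) + 1)

lemma exp_neg_mul_probSum_le (ha : 0 < a) (hp : ∀ i, p i ∈ Set.Icc a (1 - a)) {m n : ℕ}
    (hm : |(m : ℝ) - ∑ i, p i| ≤ a / 2 * ℓ) (hn : |(n : ℝ) - ∑ i, p i| ≤ a / 2 * ℓ) :
    exp (-(|(m : ℝ) - n| * log (2 / a ^ 2))) * probSum p m ≤ probSum p n := by
  have h_mean_ge : a * ℓ ≤ ∑ i, p i := by
    simpa [mul_comm (ℓ : ℝ)] using card_nsmul_le_sum univ p a fun i _ => (hp i).1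
  have h_mean_le : ∑ i, p i ≤ (1 - a) * ℓ := by
    simpa [mul_comm (ℓ : ℝ)] using sum_le_card_nsmul univ p (1 - a) fun i _ => (hp i).2
  have h_exp (j : ℕ) : exp (-(j * log (2 / a ^ 2))) = (a ^ 2 / 2) ^ j := by
    rw [← mul_neg, ← log_inv, inv_div, exp_nat_mul, exp_log (by positivity)]
  rw [abs_le] at hm hn
  rcases le_total m n with h | h <;> obtain ⟨j, rfl⟩ := Nat.exists_eq_add_of_le h
  · have h_dist : |(m : ℝ) - (m + j : ℕ)| = j := by simp
    rw [h_dist, h_exp]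
    exact pow_mul_probSum_le_probSum_add ha hp (by linarith)
  · have h_dist : |((n + j : ℕ) : ℝ) - n| = j := by simp
    rw [h_dist, h_exp]
    exact pow_mul_probSum_add_le_probSum ha hp (by linarith)

lemma exists_near_mean_inv_le_probSum (hp : ∀ i, p i ∈ Set.Icc 0 1) :
    ∃ m : ℕ, |(m : ℝ) - ∑ i, p i| ≤ √(ℓ / 2 * log (ℓ + 1)) ∧ ((ℓ : ℝ) + 1)⁻¹ ≤ probSum p m := by
  obtain ⟨m, hm⟩ := exists_inv_le_probSum p
  have h_inv : 0 < ((ℓ : ℝ) + 1)⁻¹ := by positivity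
  have h_log : -log (probSum p m) ≤ log (ℓ + 1) := by
    rw [neg_le, ← log_inv]
    exact log_le_log h_inv hm
  refine ⟨m, abs_le_sqrt ?_, hm⟩
  exact (sq_sub_sum_le hp (h_inv.trans_le hm)).trans (by gcongr)

lemma exp_neg_le_probSum (ha : 0 < a) (ha' : a ≤ 1) (hp : ∀ i, p i ∈ Set.Icc a (1 - a)) {n : ℕ}
    (hℓ : √(ℓ / 2 * log (ℓ + 1)) ≤ a / 2 * ℓ) (hn : |(n : ℝ) - ∑ i, p i| ≤ a / 2 * ℓ) :
    exp (-((√(ℓ / 2 * log (ℓ + 1)) + |(n : ℝ) - ∑ i, p i|) * log (2 / a ^ 2) + log (ℓ + 1))) ≤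
      probSum p n := by
  obtain ⟨m, h_near, h_inv⟩ :=
    exists_near_mean_inv_le_probSum fun i => Icc_one_sub_subset_Icc ha (hp i)
  have h_dist : |(m : ℝ) - n| ≤ √(ℓ / 2 * log (ℓ + 1)) + |(n : ℝ) - ∑ i, p i| := by
    rw [abs_sub_comm (n : ℝ)]
    exact (abs_sub_le _ (∑ i, p i) _).trans (add_le_add_left h_near _)
  have h_log : 0 ≤ log (2 / a ^ 2) := by
    refine log_nonneg ((one_le_div (by positivity)).2 ?_)
    nlinarith
  rw [neg_add, exp_add, exp_neg (log _), exp_log (by positivity)]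
  calc _ ≤ exp (-(|(m : ℝ) - n| * log (2 / a ^ 2))) * probSum p m := by gcongr
    _ ≤ probSum p n := exp_neg_mul_probSum_le ha hp (h_near.trans hℓ) hn

end LocalLimit

section Asymptotics

lemma tendsto_log_natCast_add_one_div : Tendsto (fun ℓ : ℕ => log (ℓ + 1) / ℓ) atTop (𝓝 0) := by
  have h := (tendsto_pow_log_div_mul_add_atTop 1 (-1) 1 one_ne_zero).comp
    (tendsto_atTop_add_const_right atTop 1 (tendsto_natCast_atTop_atTop (R := ℝ)))
  refine h.congr fun ℓ => ?_
  simp only [Function.comp_apply, pow_one, one_mul, add_neg_cancel_right]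

lemma sqrt_div_eq_sqrt_div_sq (x : ℝ) {y : ℝ} (hy : 0 ≤ y) : √x / y = √(x / y ^ 2) := by
  rw [sqrt_div' x (sq_nonneg y), sqrt_sq hy]

lemma tendsto_sqrt_half_mul_log_div :
    Tendsto (fun ℓ : ℕ => √(ℓ / 2 * log (ℓ + 1)) / ℓ) atTop (𝓝 0) := by
  have h : Tendsto (fun ℓ : ℕ => √(log (ℓ + 1) / ℓ / 2)) atTop (𝓝 0) := by
    simpa using (tendsto_log_natCast_add_one_div.div_const 2).sqrt
  refine h.congr' <| (eventually_ne_atTop 0).mono fun ℓ hℓ => ?_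
  beta_reduce
  rw [sqrt_div_eq_sqrt_div_sq _ ℓ.cast_nonneg]
  congr 1
  field_simp

variable {a : ℝ} {p : ∀ ℓ, Fin ℓ → ℝ} {n : ℕ → ℕ}

lemma eventually_exp_neg_le_probSum (ha : 0 < a) (hp : ∀ ℓ i, p ℓ i ∈ Set.Icc a (1 - a))
    (hn : Tendsto (fun ℓ => ((n ℓ : ℝ) - ∑ i, p ℓ i) / ℓ) atTop (𝓝 0)) :
    ∀ᶠ ℓ : ℕ in atTop, exp (-((√(ℓ / 2 * log (ℓ + 1)) + |(n ℓ : ℝ) - ∑ i, p ℓ i|) *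
      log (2 / a ^ 2) + log (ℓ + 1))) ≤ probSum (p ℓ) (n ℓ) := by
  have ha' : a ≤ 1 := by linarith [(hp 1 0).1, (hp 1 0).2]
  have h_near : Tendsto (fun ℓ => |((n ℓ : ℝ) - ∑ i, p ℓ i) / ℓ|) atTop (𝓝 0) := by
    simpa using hn.abs
  filter_upwards [eventually_gt_atTop 0, h_near.eventually_le_const (half_pos ha),
    tendsto_sqrt_half_mul_log_div.eventually_le_const (half_pos ha)] with ℓ hℓ h₁ h₂
  have hℓ' : (0 : ℝ) < ℓ := Nat.cast_pos.2 hℓ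
  rw [abs_div, Nat.abs_cast, div_le_iff₀ hℓ'] at h₁
  exact exp_neg_le_probSum ha ha' (hp ℓ) ((div_le_iff₀ hℓ').1 h₂) h₁

lemma eventually_probSum_pos (ha : 0 < a) (hp : ∀ ℓ i, p ℓ i ∈ Set.Icc a (1 - a))
    (hn : Tendsto (fun ℓ => ((n ℓ : ℝ) - ∑ i, p ℓ i) / ℓ) atTop (𝓝 0)) :
    ∀ᶠ ℓ in atTop, 0 < probSum (p ℓ) (n ℓ) :=
  (eventually_exp_neg_le_probSum ha hp hn).mono fun _ => (exp_pos _).trans_le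

lemma tendsto_neg_log_probSum_div (ha : 0 < a) (hp : ∀ ℓ i, p ℓ i ∈ Set.Icc a (1 - a))
    (hn : Tendsto (fun ℓ => ((n ℓ : ℝ) - ∑ i, p ℓ i) / ℓ) atTop (𝓝 0)) :
    Tendsto (fun ℓ : ℕ => -log (probSum (p ℓ) (n ℓ)) / ℓ) atTop (𝓝 0) := by
  have h_bound : Tendsto (fun ℓ : ℕ => (√(ℓ / 2 * log (ℓ + 1)) / ℓ +
      |((n ℓ : ℝ) - ∑ i, p ℓ i) / ℓ|) * log (2 / a ^ 2) + log (ℓ + 1) / ℓ) atTop (𝓝 0) := by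
    simpa using ((tendsto_sqrt_half_mul_log_div.add hn.abs).mul_const (log (2 / a ^ 2))).add
      tendsto_log_natCast_add_one_div
  refine squeeze_zero' (Eventually.of_forall fun ℓ => ?_) ?_ h_bound
  · have hp' (i : Fin ℓ) := Icc_one_sub_subset_Icc ha (hp ℓ i)
    exact div_nonneg (neg_nonneg.2 (log_nonpos (probSum_nonneg hp' _) (probSum_le_one hp' _)))
      ℓ.cast_nonneg
  · filter_upwards [eventually_exp_neg_le_probSum ha hp hn] with ℓ h
    rw [abs_div, Nat.abs_cast, ← add_div, div_mul_eq_mul_div, ← add_div]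
    gcongr
    rwa [neg_le, le_log_iff_exp_le ((exp_pos _).trans_le h)]

theorem tendsto_entCond_sub_entJoint_div (ha : 0 < a) (hp : ∀ ℓ i, p ℓ i ∈ Set.Icc a (1 - a))
    (hn : Tendsto (fun ℓ => ((n ℓ : ℝ) - ∑ i, p ℓ i) / ℓ) atTop (𝓝 0)) :
    Tendsto (fun ℓ : ℕ => 1 / (ℓ : ℝ) * (entCond (p ℓ) (n ℓ) - entJoint (p ℓ))) atTop (𝓝 0) := by
  have h_log := tendsto_neg_log_probSum_div ha hp hn
  have h_bound : Tendsto (fun ℓ : ℕ => √(log a ^ 2 / 2 * (-log (probSum (p ℓ) (n ℓ)) / ℓ)) +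
      -log (probSum (p ℓ) (n ℓ)) / ℓ) atTop (𝓝 0) := by
    simpa using (h_log.const_mul (log a ^ 2 / 2)).sqrt.add h_log
  refine squeeze_zero_norm' ?_ h_bound
  filter_upwards [eventually_probSum_pos ha hp hn, eventually_gt_atTop 0] with ℓ h_pos hℓ
  have h_odds : ∑ i, logOdds (p ℓ i) ^ 2 ≤ ℓ * log a ^ 2 := by
    have h_term (i : Fin ℓ) : logOdds (p ℓ i) ^ 2 ≤ log a ^ 2 := by
      simpa using sq_le_sq.2 ((abs_logOdds_le ha (hp ℓ i)).trans (neg_le_abs _))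
    simpa using sum_le_card_nsmul univ _ _ fun i _ => h_term i
  have h_log_nonneg : 0 ≤ -log (probSum (p ℓ) (n ℓ)) := neg_nonneg.2 <|
    log_nonpos h_pos.le (probSum_le_one (fun i => Icc_one_sub_subset_Icc ha (hp ℓ i)) _)
  have h_rescale : ℓ * log a ^ 2 / 2 * -log (probSum (p ℓ) (n ℓ)) / ℓ ^ 2 =
      log a ^ 2 / 2 * (-log (probSum (p ℓ) (n ℓ)) / ℓ) := by
    field_simp
  rw [one_div_mul_eq_div, norm_eq_abs, abs_div, Nat.abs_cast, ← h_rescale,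
    ← sqrt_div_eq_sqrt_div_sq _ ℓ.cast_nonneg, ← add_div]
  gcongr
  exact (abs_entCond_sub_entJoint_le (fun i => Icc_one_sub_subset_Ioo ha (hp ℓ i)) h_pos).trans
    (by gcongr)

end Asymptotics

section RiemannSum

open MeasureTheory

variable {E : Type*} [NormedAddCommGroup E] [NormedSpace ℝ E] [CompleteSpace E]
  {f : ℝ → E}

lemma norm_integral_sub_smul_le {a b ε : ℝ} {c : E} (hab : a ≤ b)
    (hf : ContinuousOn f (Set.Icc a b)) (hc : ∀ y ∈ Set.Icc a b, ‖f y - c‖ ≤ ε) :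
    ‖(∫ y in a..b, f y) - (b - a) • c‖ ≤ ε * (b - a) := by
  have h_int : IntervalIntegrable f volume a b := hf.intervalIntegrable_of_Icc hab
  rw [← intervalIntegral.integral_const, ← intervalIntegral.integral_sub h_int (by simp),
    ← abs_of_nonneg (sub_nonneg.2 hab)]
  refine intervalIntegral.norm_integral_le_of_norm_le_const fun y hy => hc y ?_
  rw [Set.uIoc_of_le hab] at hy
  exact Set.Ioc_subset_Icc_self hy

lemma norm_integral_sub_riemannSum_le {δ ε : ℝ} {n : ℕ}
    (hf : ContinuousOn f (Set.Icc 0 1))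
    (hfε : ∀ x ∈ Set.Icc (0 : ℝ) 1, ∀ y ∈ Set.Icc (0 : ℝ) 1, dist x y < δ → dist (f x) (f y) < ε)
    (hn : 0 < n) (hδ : 1 / (n : ℝ) < δ) :
    ‖(∫ y in (0 : ℝ)..1, f y) - (1 / n : ℝ) • ∑ i : Fin n, f (i / n)‖ ≤ ε := by
  have hn' : (0 : ℝ) < n := Nat.cast_pos.2 hn
  let t (k : ℕ) : ℝ := k / n
  have ht_step (k : ℕ) : t (k + 1) - t k = 1 / n := by simp only [t]; push_cast; ring
  have ht_le (k : ℕ) : t k ≤ t (k + 1) := sub_nonneg.1 (by rw [ht_step]; positivity)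
  have ht_subset (k : ℕ) (hk : k < n) : Set.Icc (t k) (t (k + 1)) ⊆ Set.Icc 0 1 :=
    Set.Icc_subset_Icc (by positivity) ((div_le_one hn').2 (Nat.cast_le.2 hk))
  have h_cell (k : ℕ) (hk : k < n) :
      ‖(∫ y in t k..t (k + 1), f y) - (1 / n : ℝ) • f (t k)‖ ≤ ε * (1 / n) := by
    rw [← ht_step k]
    refine norm_integral_sub_smul_le (ht_le k) (hf.mono (ht_subset k hk)) fun y hy => ?_
    rw [← dist_eq_norm]
    refine (hfε y (ht_subset k hk hy) _ (ht_subset k hk (Set.left_mem_Icc.2 (ht_le k))) ?_).le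
    rw [dist_eq, abs_of_nonneg (sub_nonneg.2 hy.1)]
    linarith [hy.2, ht_step k]
  have h_integral : ∫ y in (0 : ℝ)..1, f y = ∑ k ∈ range n, ∫ y in t k..t (k + 1), f y := by
    rw [intervalIntegral.sum_integral_adjacent_intervals fun k hk =>
      (hf.mono (ht_subset k hk)).intervalIntegrable_of_Icc (ht_le k)]
    simp [t, hn'.ne']
  rw [h_integral, Fin.sum_univ_eq_sum_range (fun k => f (k / n)), smul_sum, ← sum_sub_distrib]
  calc _ ≤ ∑ _ ∈ range n, ε * (1 / n : ℝ) :=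
        norm_sum_le_of_le _ fun k hk => h_cell k (mem_range.1 hk)
    _ = ε := by
        rw [sum_const, card_range, nsmul_eq_mul]
        field_simp

theorem tendsto_riemannSum (hf : ContinuousOn f (Set.Icc 0 1)) :
    Tendsto (fun n : ℕ => (1 / n : ℝ) • ∑ i : Fin n, f (i / n)) atTop
      (𝓝 (∫ y in (0 : ℝ)..1, f y)) := by
  have h_unif := isCompact_Icc.uniformContinuousOn_of_continuous hf
  rw [Metric.uniformContinuousOn_iff] at h_unif
  rw [Metric.tendsto_nhds]
  intro ε hε
  obtain ⟨δ, hδ, h⟩ := h_unif (ε / 2) (half_pos hε)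
  filter_upwards [eventually_gt_atTop 0,
    tendsto_one_div_atTop_nhds_zero_nat.eventually_lt_const hδ] with n hn hnδ
  rw [dist_comm, dist_eq_norm]
  exact (norm_integral_sub_riemannSum_le hf h hn hnδ).trans_lt (half_lt_self hε)

end RiemannSum

lemma tendsto_of_tendsto_sqrt_mul_abs_sub {u : ℕ → ℝ} {r : ℝ}
    (hu : Tendsto (fun n : ℕ => √n * |u n - r|) atTop (𝓝 0)) : Tendsto u atTop (𝓝 r) := by
  rw [tendsto_iff_norm_sub_tendsto_zero]
  refine squeeze_zero' (.of_forall fun _ => norm_nonneg _) ?_ hu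
  filter_upwards [eventually_ge_atTop 1] with n hn
  exact le_mul_of_one_le_left (abs_nonneg _) (one_le_sqrt.2 (Nat.one_le_cast.2 hn))

lemma exists_pos_forall_mem_Icc_one_sub {X : Type*} [TopologicalSpace X] {s : Set X} {l : X → ℝ}
    (hs : IsCompact s) (hl : ContinuousOn l s) (hl01 : ∀ y ∈ s, l y ∈ Set.Ioo (0 : ℝ) 1) :
    ∃ a > 0, ∀ y ∈ s, l y ∈ Set.Icc a (1 - a) := by
  have h_min := hs.exists_forall_le' (f := fun y => min (l y) (1 - l y)) (a := 0)
    (hl.inf (continuousOn_const.sub hl)) fun y hy => lt_min (hl01 y hy).1 (sub_pos.2 (hl01 y hy).2)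
  obtain ⟨a, ha, h⟩ := h_min
  exact ⟨a, ha, fun y hy => ⟨(le_min_iff.1 (h y hy)).1, le_sub_comm.1 (le_min_iff.1 (h y hy)).2⟩⟩

theorem stmt0_general (l : ℝ → ℝ) (hl : ContinuousOn l (Set.Icc 0 1))
    (hl01 : ∀ y ∈ Set.Icc (0 : ℝ) 1, l y ∈ Set.Ioo (0 : ℝ) 1) (n : ℕ → ℕ)
    (hconv : Tendsto (fun ℓ : ℕ => (n ℓ : ℝ) / ℓ) atTop (𝓝 (∫ y in (0 : ℝ)..1, l y))) :
    Tendsto (fun ℓ : ℕ => 1 / (ℓ : ℝ) * (entCond (fun i : Fin ℓ => l (i / ℓ)) (n ℓ) -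
      entJoint fun i : Fin ℓ => l (i / ℓ))) atTop (𝓝 0) := by
  obtain ⟨a, ha, hla⟩ := exists_pos_forall_mem_Icc_one_sub isCompact_Icc hl hl01
  refine tendsto_entCond_sub_entJoint_div ha (fun ℓ i => hla _ ?_) ?_
  · exact ⟨by positivity, div_le_one_of_le₀ (Nat.cast_le.2 i.2.le) ℓ.cast_nonneg⟩
  · have h := hconv.sub (tendsto_riemannSum hl)
    rw [sub_self] at h
    refine h.congr fun ℓ => ?_
    rw [smul_eq_mul, one_div_mul_eq_div, sub_div]

/-- for independent `{0,1}`-valued variables `K_j^{(ℓ)}` with means `l(j/ℓ)`,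
if `√ℓ · |n_ℓ/ℓ − r| → 0` where `r = ∫₀¹ l`, then
`liminf (1/ℓ)[H(K | S = n_ℓ) − H(K)] ≥ 0`, stated in the equivalent
`∀ ε > 0, eventually ≥ -ε` form. -/
theorem stmt0 (l : ℝ → ℝ) (hl : ContinuousOn l (Set.Icc 0 1))
    (hl01 : ∀ y ∈ Set.Icc (0:ℝ) 1, l y ∈ Set.Ioo (0:ℝ) 1)
    (n : ℕ → ℕ) (hn : ∀ ℓ, n ℓ ≤ ℓ)
    (hconv : Tendsto (fun ℓ : ℕ =>
        Real.sqrt ℓ * |(n ℓ : ℝ) / (ℓ : ℝ) - ∫ y in (0:ℝ)..1, l y|) atTop (nhds 0)) :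
    ∀ ε > 0, ∀ᶠ ℓ : ℕ in atTop,
      (1 / (ℓ : ℝ)) * (entCond (fun i : Fin ℓ => l ((i : ℝ) / (ℓ : ℝ))) (n ℓ)
        - entJoint (fun i : Fin ℓ => l ((i : ℝ) / (ℓ : ℝ)))) ≥ -ε := by
  exact fun ε hε => (stmt0_general l hl hl01 n
    (tendsto_of_tendsto_sqrt_mul_abs_sub hconv)).eventually_const_le (neg_lt_zero.2 hε)
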